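/- arXiv:1612.03689 — 2 statements merged into one kernel-verified Lean document; each statement's English description precedes it below -/
import Mathlib

section
/- Let dμ(x) = 1_{(−b,b)}(x) e^{−V(x)} dx be an even probability measure with V continuous. Let φ: (−b,b) → ℝ⁺ be an even function, non-increasing on [0,b), such that dμ̃ = φ dμ is a probability measure. Then C_P(μ̃) ≤ C_P(μ). -/
open MeasureTheory Real Set

/-- Variance of `f` under `μ`, as `inf_a ∫ (f-a)^2 dμ`. -/
noncomputable def Var (μ : Measure ℝ) (f : ℝ → ℝ) : ℝ := ⨅ a : ℝ, ∫ x, (f x - a)^2 ∂μ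

/-- `μ` satisfies a Poincaré inequality with constant `C`, over test functions that are
differentiable on the supporting interval `s` with `f, f' ∈ L²(μ)`. -/
def PoincareOn (μ : Measure ℝ) (s : Set ℝ) (C : ℝ) : Prop :=
  ∀ f f' : ℝ → ℝ, (∀ x ∈ s, HasDerivAt f (f' x) x) →
    Integrable (fun x => (f x)^2) μ → Integrable (fun x => (f' x)^2) μ →
    Var μ f ≤ C * ∫ x, (f' x)^2 ∂μ

/-- The optimal Poincaré constant of `μ` on the interval `s`. -/
noncomputable def CP (μ : Measure ℝ) (s : Set ℝ) : ℝ := sInf {C | 0 ≤ C ∧ PoincareOn μ s C}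

/-! An odd function has mean zero under an even measure, so applying the Poincaré inequality for `μ`
to the odd extensions of the two halves of `f` bounds the integral of `(f - f 0) ^ 2` instead of the
variance. In this form the inequality localizes to every symmetric interval `[-r, r]`: continue `f`
past `r` by functions that level off faster and faster, whose derivatives contribute nothing in the
limit. The density `φ` is an average of indicators of symmetric intervals, so the localized
inequalities add up to the one for `φ μ`, whose left-hand side dominates the variance. -/

open Filter
open scoped ENNReal Function Pointwise Topology

section Balanced

variable {s : Set ℝ}

lemma balanced_real_iff : Balanced ℝ s ↔ ∀ x ∈ s, ∀ y, |y| ≤ |x| → y ∈ s := by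
  refine ⟨fun hs x hx y hyx => ?_, fun h => balanced_iff_smul_mem.2 fun a ha x hx => ?_⟩
  · simpa using hs.smul_mem_mono (a := x) (b := y) (x := (1 : ℝ)) (by simpa using hx) hyx
  · refine h x hx _ ?_
    rw [smul_eq_mul, abs_mul]
    exact mul_le_of_le_one_left (abs_nonneg x) ha

lemma abs_mem_of_balanced (hs : Balanced ℝ s) {x : ℝ} (hx : x ∈ s) : |x| ∈ s :=
  balanced_real_iff.1 hs x hx _ (abs_abs x).le

lemma Icc_neg_abs_subset_of_balanced (hs : Balanced ℝ s) {x : ℝ} (hx : x ∈ s) :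
    Icc (-|x|) |x| ⊆ s :=
  fun y hy => balanced_real_iff.1 hs x hx y (abs_le.2 hy)

lemma balanced_Ioo_neg_self (b : ℝ) : Balanced ℝ (Ioo (-b) b) :=
  balanced_real_iff.2 fun _ hx _ hyx => abs_lt.1 (hyx.trans_lt (abs_lt.2 hx))

lemma measurableSet_of_balanced (hs : Balanced ℝ s) : MeasurableSet s := by
  refine OrdConnected.measurableSet ⟨fun x hx y hy z hz => ?_⟩
  rcases le_max_iff.1 (abs_le_max_abs_abs hz.1 hz.2) with h | h
  · exact balanced_real_iff.1 hs x hx z h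
  · exact balanced_real_iff.1 hs y hy z h

lemma measure_le_of_balanced_of_forall_Icc {ν : Measure ℝ} {a : ℝ≥0∞} (hs : Balanced ℝ s)
    (h : ∀ x ∈ s, ν (Icc (-|x|) |x|) ≤ a) : ν s ≤ a := by
  by_cases hmax : ∃ x ∈ s, ∀ y ∈ s, |y| ≤ |x|
  · obtain ⟨x, hx, hle⟩ := hmax
    exact (measure_mono fun y hy => abs_le.1 (hle y hy)).trans (h x hx)
  push Not at hmax
  -- Without an element of largest absolute value, the intervals at rational points exhaust `s`.
  have hcover : s ⊆ ⋃ q ∈ {q : ℚ | (q : ℝ) ∈ s}, Icc (-|(q : ℝ)|) |(q : ℝ)| := by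
    intro x hx
    obtain ⟨y, hy, hxy⟩ := hmax x hx
    obtain ⟨q, hxq, hqy⟩ := exists_rat_btwn hxy
    have hq : |(q : ℝ)| = q := abs_of_pos ((abs_nonneg x).trans_lt hxq)
    refine mem_biUnion (x := q) (balanced_real_iff.1 hs y hy q (hq.trans_le hqy.le)) ?_
    exact abs_le.1 (hxq.le.trans_eq hq.symm)
  have hdir : DirectedOn ((· ⊆ ·) on fun q : ℚ => Icc (-|(q : ℝ)|) |(q : ℝ)|)
      {q : ℚ | (q : ℝ) ∈ s} := by
    intro p hp q hq
    rcases le_total |(p : ℝ)| |(q : ℝ)| with hpq | hpq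
    · exact ⟨q, hq, Icc_subset_Icc (neg_le_neg hpq) hpq, Subset.rfl⟩
    · exact ⟨p, hp, Subset.rfl, Icc_subset_Icc (neg_le_neg hpq) hpq⟩
  calc ν s ≤ ν (⋃ q ∈ {q : ℚ | (q : ℝ) ∈ s}, Icc (-|(q : ℝ)|) |(q : ℝ)|) := measure_mono hcover
    _ = ⨆ q ∈ {q : ℚ | (q : ℝ) ∈ s}, ν (Icc (-|(q : ℝ)|) |(q : ℝ)|) :=
        measure_biUnion_eq_iSup (to_countable _) hdir
    _ ≤ a := iSup₂_le fun q hq => h q hq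

end Balanced

/-- `φ` is a non-increasing function of `|x|` on `s`; on a symmetric interval this says that `φ`
is even and non-increasing on the non-negative half. -/
def SymmDecreasingOn (φ : ℝ → ℝ) (s : Set ℝ) : Prop :=
  ∀ x ∈ s, ∀ y ∈ s, |x| ≤ |y| → φ y ≤ φ x

namespace SymmDecreasingOn

variable {φ : ℝ → ℝ} {s : Set ℝ}

lemma of_even_of_antitoneOn {b : ℝ} (heven : Function.Even φ) (hanti : AntitoneOn φ (Ico 0 b)) :
    SymmDecreasingOn φ (Ioo (-b) b) := by
  have habs : ∀ x, φ |x| = φ x := fun x => by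
    rcases abs_choice x with h | h <;> rw [h]
    exact heven x
  intro x hx y hy hxy
  rw [← habs x, ← habs y]
  exact hanti ⟨abs_nonneg x, abs_lt.2 hx⟩ ⟨abs_nonneg y, abs_lt.2 hy⟩ hxy

lemma balanced_superlevel (hφ : SymmDecreasingOn φ s) (hs : Balanced ℝ s) (t : ℝ) :
    Balanced ℝ (s ∩ {x | t < φ x}) := by
  refine balanced_real_iff.2 fun x hx y hyx => ?_
  have hy : y ∈ s := balanced_real_iff.1 hs x hx.1 y hyx
  exact ⟨hy, lt_of_lt_of_le hx.2 (hφ y hy x hx.1 hyx)⟩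

lemma aemeasurable {μ : Measure ℝ} (hφ : SymmDecreasingOn φ s) (hs : Balanced ℝ s)
    (hμ : ∀ᵐ x ∂μ, x ∈ s) : AEMeasurable φ μ := by
  rw [← Measure.restrict_eq_self_of_ae_mem hμ]
  refine aemeasurable_restrict_of_measurable_subtype (measurableSet_of_balanced hs)
    (measurable_of_Ioi fun t => ?_)
  convert! measurable_subtype_coe (measurableSet_of_balanced (hφ.balanced_superlevel hs t)) using 1
  ext x
  simp

end SymmDecreasingOn

section NegInvariant

variable {G : Type*}

lemma even_indicator {β : Type*} [Neg G] [Zero β] {s : Set G} {g : G → β} (hs : -s = s)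
    (hg : Function.Even g) : Function.Even (s.indicator g) := by
  intro x
  have hx : -x ∈ s ↔ x ∈ s := by rw [← Set.mem_neg, hs]
  by_cases h : x ∈ s <;> simp [hx, h, hg x]

variable [MeasurableSpace G] [InvolutiveNeg G] [MeasurableNeg G] {μ : Measure G} [μ.IsNegInvariant]

lemma isNegInvariant_withDensity_of_even {d : G → ℝ≥0∞} (hd : Function.Even d) :
    (μ.withDensity d).IsNegInvariant := by
  refine ⟨Measure.ext fun s hs => ?_⟩
  rw [Measure.neg_apply, withDensity_apply _ hs.neg, withDensity_apply _ hs,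
    ← lintegral_indicator hs.neg, ← lintegral_indicator hs, ← lintegral_neg_eq_self]
  refine lintegral_congr fun x => ?_
  by_cases hx : x ∈ s <;> simp [indicator, hx, hd x]

lemma isNegInvariant_restrict_of_neg_eq {s : Set G} (hs : MeasurableSet s) (hneg : -s = s) :
    (μ.restrict s).IsNegInvariant := by
  rw [← withDensity_indicator_one hs]
  exact isNegInvariant_withDensity_of_even (even_indicator hneg fun _ => rfl)

end NegInvariant

section Abs

variable {μ : Measure ℝ} [μ.IsNegInvariant]

lemma quasiMeasurePreserving_abs : Measure.QuasiMeasurePreserving (|·| : ℝ → ℝ) μ μ := by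
  refine ⟨continuous_abs.measurable, Measure.AbsolutelyContinuous.mk fun s hs hμs => ?_⟩
  rw [Measure.map_apply continuous_abs.measurable hs]
  refine measure_mono_null (t := s ∪ -s) (fun x (hx : |x| ∈ s) => ?_)
    (measure_union_null hμs (by rwa [Measure.measure_neg]))
  rcases abs_choice x with h | h <;> rw [h] at hx
  exacts [Or.inl hx, Or.inr hx]

lemma two_mul_lintegral_eq_lintegral_abs_add {h : ℝ → ℝ≥0∞} (hh : AEMeasurable h μ) :
    2 * ∫⁻ x, h x ∂μ = ∫⁻ x, h |x| ∂μ + ∫⁻ x, h (-|x|) ∂μ := by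
  have habs : AEMeasurable (fun x => h |x|) μ :=
    hh.comp_quasiMeasurePreserving quasiMeasurePreserving_abs
  rw [← lintegral_add_left' habs, two_mul]
  nth_rw 2 [← lintegral_neg_eq_self]
  rw [← lintegral_add_left' hh]
  refine lintegral_congr fun x => ?_
  rcases abs_choice x with hx | hx <;> rw [hx]
  rw [neg_neg, add_comm]

end Abs

section Variance

variable {μ : Measure ℝ}

lemma Var_le_integral_sq_sub (f : ℝ → ℝ) (a : ℝ) : Var μ f ≤ ∫ x, (f x - a) ^ 2 ∂μ :=
  ciInf_le ⟨0, forall_mem_range.2 fun _ => integral_nonneg fun _ => sq_nonneg _⟩ a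

lemma integral_sq_le_Var_of_odd [IsFiniteMeasure μ] [μ.IsNegInvariant] {g : ℝ → ℝ}
    (hodd : Function.Odd g) (hg : MemLp g 2 μ) : ∫ x, (g x) ^ 2 ∂μ ≤ Var μ g := by
  have hint : Integrable g μ := hg.integrable one_le_two
  have hmean : ∫ x, g x ∂μ = 0 := by
    have h := integral_neg_eq_self g μ
    simp only [hodd _, integral_neg] at h
    linarith
  refine le_ciInf fun a => ?_
  have hexpand : ∫ x, (g x - a) ^ 2 ∂μ = ∫ x, (g x) ^ 2 ∂μ + ∫ _, a ^ 2 ∂μ := by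
    have h := integral_add (hg.integrable_sq.sub (hint.const_mul (2 * a)))
      (integrable_const (a ^ 2))
    simp only [Pi.sub_apply] at h
    rw [integral_sub hg.integrable_sq (hint.const_mul (2 * a)), integral_const_mul, hmean, mul_zero,
      sub_zero] at h
    rw [← h]
    exact integral_congr_ae (.of_forall fun x => by ring)
  rw [hexpand]
  exact le_add_of_nonneg_right (integral_nonneg fun _ => sq_nonneg a)

end Variance

lemma aemeasurable_of_hasDerivAt {μ : Measure ℝ} {s : Set ℝ} {f f' : ℝ → ℝ}
    (hs : MeasurableSet s) (hμ : ∀ᵐ x ∂μ, x ∈ s) (hf : ∀ x ∈ s, HasDerivAt f (f' x) x) :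
    AEMeasurable f μ := by
  rw [← Measure.restrict_eq_self_of_ae_mem hμ]
  exact ContinuousOn.aemeasurable (fun x hx => (hf x hx).continuousAt.continuousWithinAt) hs

lemma aemeasurable_deriv_of_hasDerivAt {μ : Measure ℝ} {s : Set ℝ} {f f' : ℝ → ℝ}
    (hμ : ∀ᵐ x ∂μ, x ∈ s) (hf : ∀ x ∈ s, HasDerivAt f (f' x) x) : AEMeasurable f' μ :=
  (measurable_deriv f).aemeasurable.congr (hμ.mono fun x hx => (hf x hx).deriv)

lemma hasDerivAt_ite_le {f g : ℝ → ℝ} {r x d : ℝ} (hf : x ≤ r → HasDerivAt f d x)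
    (hg : r ≤ x → HasDerivAt g d x) (hfg : f r = g r) :
    HasDerivAt (fun y => if y ≤ r then f y else g y) d x := by
  rcases lt_trichotomy x r with hx | rfl | hx
  · refine (hf hx.le).congr_of_eventuallyEq ?_
    filter_upwards [Iio_mem_nhds hx] with y hy using if_pos hy.le
  · rw [← hasDerivWithinAt_univ, ← Iic_union_Ici (a := x)]
    refine HasDerivWithinAt.union
      ((hf le_rfl).hasDerivWithinAt.congr_of_mem (fun y hy => if_pos (mem_Iic.1 hy)) self_mem_Iic)
      ((hg le_rfl).hasDerivWithinAt.congr_of_mem (fun y hy => ?_) self_mem_Ici)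
    rcases (mem_Ici.1 hy).eq_or_lt with rfl | hxy
    · rw [if_pos le_rfl, hfg]
    · exact if_neg hxy.not_ge
  · refine (hg hx.le).congr_of_eventuallyEq ?_
    filter_upwards [Ioi_mem_nhds hx] with y hy using if_neg (not_le.2 hy)

/-- The odd function equal to `f - f 0` on the non-negative half-line. -/
noncomputable def oddExtension (f : ℝ → ℝ) (x : ℝ) : ℝ :=
  if x ≤ 0 then f 0 - f (-x) else f x - f 0

lemma odd_oddExtension (f : ℝ → ℝ) : Function.Odd (oddExtension f) := by
  intro x
  unfold oddExtension
  rcases lt_trichotomy x 0 with h | rfl | h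
  · rw [if_neg (by linarith), if_pos h.le, neg_sub]
  · simp
  · rw [if_pos (by linarith), if_neg h.not_ge, neg_neg, neg_sub]

lemma sq_oddExtension (f : ℝ → ℝ) (x : ℝ) : oddExtension f x ^ 2 = (f |x| - f 0) ^ 2 := by
  unfold oddExtension
  split_ifs with h
  · rw [abs_of_nonpos h, sub_sq_comm]
  · rw [abs_of_pos (not_le.1 h)]

lemma hasDerivAt_oddExtension {f : ℝ → ℝ} {d x : ℝ} (hf : HasDerivAt f d |x|) :
    HasDerivAt (oddExtension f) d x := by
  refine hasDerivAt_ite_le (fun hx => ?_) (fun hx => ?_) (by simp)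
  · rw [abs_of_nonpos hx] at hf
    exact ((hf.comp x (hasDerivAt_neg x)).const_sub (f 0)).congr_deriv (by ring)
  · rw [abs_of_nonneg hx] at hf
    exact hf.sub_const (f 0)

/-- The continuation of `f` past `r` that starts with slope `f' r` and levels off exponentially at
rate `κ`. With `saturateDeriv` as its derivative it replaces a cut-off of `f'` to `(-∞, r]`, which
need not be the derivative of any function. -/
noncomputable def saturate (f f' : ℝ → ℝ) (r κ x : ℝ) : ℝ :=
  if x ≤ r then f x else f r + f' r * ((1 - exp (-(κ * (x - r)))) / κ)

/-- The derivative of `saturate f f' r κ`, where `f'` is the derivative of `f`. -/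
noncomputable def saturateDeriv (f' : ℝ → ℝ) (r κ x : ℝ) : ℝ :=
  if x ≤ r then f' x else f' r * exp (-(κ * (x - r)))

section Saturate

variable {f f' : ℝ → ℝ} {r κ : ℝ}

lemma hasDerivAt_saturate (hκ : κ ≠ 0) {x : ℝ} (hf : x ≤ r → HasDerivAt f (f' x) x) :
    HasDerivAt (saturate f f' r κ) (saturateDeriv f' r κ x) x := by
  refine hasDerivAt_ite_le (fun hx => ?_) (fun hx => ?_) (by simp)
  · rw [saturateDeriv, if_pos hx]
    exact hf hx
  · have hslope : saturateDeriv f' r κ x = f' r * exp (-(κ * (x - r))) := by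
      rcases hx.eq_or_lt with rfl | hx
      · simp [saturateDeriv]
      · exact if_neg hx.not_ge
    have hexp : HasDerivAt (fun y => exp (-(κ * (y - r)))) (exp (-(κ * (x - r))) * -(κ * 1)) x :=
      (((hasDerivAt_id x).sub_const r).const_mul κ).neg.exp
    refine ((((hexp.const_sub 1).div_const κ).const_mul (f' r)).const_add (f r)).congr_deriv ?_
    rw [hslope]
    field_simp

lemma exists_forall_abs_saturate_le (hκ : 0 < κ) (hf : ContinuousOn f (Icc 0 r)) :
    ∃ M, ∀ x, 0 ≤ x → |saturate f f' r κ x| ≤ M := by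
  obtain ⟨M, hM⟩ := isCompact_Icc.exists_bound_of_continuousOn hf
  refine ⟨max M (|f r| + |f' r| * (1 / κ)), fun x hx => ?_⟩
  unfold saturate
  split_ifs with hxr
  · exact (hM x ⟨hx, hxr⟩).trans (le_max_left _ _)
  · refine le_max_of_le_right ((abs_add_le _ _).trans ?_)
    rw [abs_mul, abs_div, abs_of_pos hκ]
    have hexp : exp (-(κ * (x - r))) ≤ 1 :=
      exp_le_one_iff.2 (neg_nonpos.2 (mul_nonneg hκ.le (sub_nonneg.2 (not_le.1 hxr).le)))
    gcongr
    rw [abs_of_nonneg (sub_nonneg.2 hexp)]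
    linarith [exp_pos (-(κ * (x - r)))]

end Saturate

lemma tendsto_setLIntegral_sq_mul_exp_neg {α : Type*} [MeasurableSpace α] {μ : Measure α}
    [IsFiniteMeasure μ] {g : α → ℝ} {s : Set α} (hg : Measurable g) (hs : MeasurableSet s)
    (hpos : ∀ x ∈ s, 0 < g x) (a : ℝ) :
    Tendsto (fun κ : ℝ => ∫⁻ x in s, ENNReal.ofReal ((a * exp (-(κ * g x))) ^ 2) ∂μ) atTop
      (𝓝 0) := by
  rw [← lintegral_zero (μ := μ.restrict s)]
  refine tendsto_lintegral_filter_of_dominated_convergence (fun _ => ENNReal.ofReal (a ^ 2))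
    (.of_forall fun κ => by fun_prop) ?_ (by simp [ENNReal.mul_eq_top]) ?_
  · filter_upwards [eventually_ge_atTop 0] with κ hκ
    filter_upwards [ae_restrict_mem hs] with x hx
    refine ENNReal.ofReal_le_ofReal ?_
    rw [mul_pow]
    exact mul_le_of_le_one_right (sq_nonneg a) (pow_le_one₀ (exp_pos _).le
      (exp_le_one_iff.2 (neg_nonpos.2 (mul_nonneg hκ (hpos x hx).le))))
  · filter_upwards [ae_restrict_mem hs] with x hx
    have hexp : Tendsto (fun κ : ℝ => exp (-(κ * g x))) atTop (𝓝 0) :=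
      tendsto_exp_neg_atTop_nhds_zero.comp (tendsto_id.atTop_mul_const (hpos x hx))
    simpa using ENNReal.tendsto_ofReal ((hexp.const_mul a).pow 2)

lemma lintegral_sq_saturateDeriv_abs {μ : Measure ℝ} (f' : ℝ → ℝ) (r κ : ℝ) :
    ∫⁻ x, ENNReal.ofReal (saturateDeriv f' r κ |x| ^ 2) ∂μ =
      ∫⁻ x in Icc (-r) r, ENNReal.ofReal (f' |x| ^ 2) ∂μ +
        ∫⁻ x in (Icc (-r) r)ᶜ, ENNReal.ofReal ((f' r * exp (-(κ * (|x| - r)))) ^ 2) ∂μ := by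
  rw [← lintegral_add_compl _ measurableSet_Icc]
  refine congrArg₂ (· + ·) (setLIntegral_congr_fun measurableSet_Icc fun x hx => ?_)
    (setLIntegral_congr_fun measurableSet_Icc.compl fun x hx => ?_)
  · simp only [saturateDeriv, if_pos (abs_le.2 hx)]
  · simp only [saturateDeriv, if_neg (mt abs_le.1 hx)]

lemma ae_mem_withDensity_ofReal_indicator {α : Type*} [MeasurableSpace α] (μ : Measure α)
    {s : Set α} (hs : MeasurableSet s) (g : α → ℝ) :
    ∀ᵐ x ∂(μ.withDensity fun x => ENNReal.ofReal (s.indicator g x)), x ∈ s := by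
  refine (withDensity_apply _ hs.compl).trans
    ((setLIntegral_congr_fun hs.compl fun x hx => ?_).trans lintegral_zero)
  rw [indicator_of_notMem hx, ENNReal.ofReal_zero]

lemma lintegral_ofReal_sq_ne_top_iff {α : Type*} [MeasurableSpace α] {μ : Measure α} {g : α → ℝ}
    (hg : AEMeasurable g μ) :
    ∫⁻ x, ENNReal.ofReal (g x ^ 2) ∂μ ≠ ∞ ↔ Integrable (fun x => g x ^ 2) μ :=
  lintegral_ofReal_ne_top_iff_integrable (hg.pow_const 2).aestronglyMeasurable
    (.of_forall fun _ => sq_nonneg _)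

lemma ofReal_integral_sq {α : Type*} [MeasurableSpace α] {μ : Measure α} {g : α → ℝ}
    (hg : Integrable (fun x => g x ^ 2) μ) :
    ENNReal.ofReal (∫ x, g x ^ 2 ∂μ) = ∫⁻ x, ENNReal.ofReal (g x ^ 2) ∂μ :=
  ofReal_integral_eq_lintegral_ofReal hg (.of_forall fun _ => sq_nonneg _)

/- By the layer-cake formula, the density `φ` is an average of the indicators of its superlevel
sets. -/
lemma lintegral_withDensity_le_of_superlevel {α : Type*} [MeasurableSpace α] {μ : Measure α}
    [SFinite μ] {φ : α → ℝ} {u v : α → ℝ≥0∞} {c : ℝ≥0∞} (hφ₀ : 0 ≤ᵐ[μ] φ)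
    (hφ : AEMeasurable φ μ) (hu : AEMeasurable u μ) (hv : AEMeasurable v μ) (hc : c ≠ ∞)
    (hfin : ∫⁻ x, v x ∂(μ.withDensity fun x => ENNReal.ofReal (φ x)) ≠ ∞)
    (h : ∀ t, 0 < t → ∫⁻ x in {x | t < φ x}, v x ∂μ ≠ ∞ →
      ∫⁻ x in {x | t < φ x}, u x ∂μ ≤ c * ∫⁻ x in {x | t < φ x}, v x ∂μ) :
    ∫⁻ x, u x ∂(μ.withDensity fun x => ENNReal.ofReal (φ x)) ≤
      c * ∫⁻ x, v x ∂(μ.withDensity fun x => ENNReal.ofReal (φ x)) := by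
  have hswap : ∀ w : α → ℝ≥0∞, AEMeasurable w μ →
      ∫⁻ x, w x ∂(μ.withDensity fun x => ENNReal.ofReal (φ x)) =
        ∫⁻ x, ENNReal.ofReal (φ x) ∂(μ.withDensity w) := fun w hw => by
    rw [lintegral_withDensity_eq_lintegral_mul₀ hφ.ennreal_ofReal hw,
      lintegral_withDensity_eq_lintegral_mul₀ hw hφ.ennreal_ofReal, mul_comm]
  have hlayer : ∀ w : α → ℝ≥0∞, ∫⁻ x, ENNReal.ofReal (φ x) ∂(μ.withDensity w) =
      ∫⁻ t in Ioi 0, ∫⁻ x in {x | t < φ x}, w x ∂μ := fun w => by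
    have hac := withDensity_absolutelyContinuous μ w
    simp_rw [lintegral_eq_lintegral_meas_lt _ (hac.ae_le hφ₀) (hφ.mono_ac hac), withDensity_apply']
  have hfin_level : ∀ t, 0 < t → ∫⁻ x in {x | t < φ x}, v x ∂μ ≠ ∞ := fun t ht => by
    have hac := withDensity_absolutelyContinuous μ v
    rw [← withDensity_apply']
    rw [hswap v hv, lintegral_ofReal_ne_top_iff_integrable (hφ.mono_ac hac).aestronglyMeasurable
      (hac.ae_le hφ₀)] at hfin
    exact (hfin.measure_gt_lt_top ht).ne
  rw [hswap u hu, hswap v hv, hlayer, hlayer, ← lintegral_const_mul' _ _ hc]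
  exact setLIntegral_mono' measurableSet_Ioi fun t ht => h t ht (hfin_level t ht)

namespace PoincareOn

variable {μ : Measure ℝ} [IsFiniteMeasure μ] [μ.IsNegInvariant] {s : Set ℝ} {C : ℝ}
  {f f' : ℝ → ℝ}

lemma integral_sq_abs_le (hP : PoincareOn μ s C) (hs : Balanced ℝ s) (hμ : ∀ᵐ x ∂μ, x ∈ s)
    (hf : ∀ x ∈ s, HasDerivAt f (f' x) x) (hint : Integrable (fun x => (f |x| - f 0) ^ 2) μ)
    (hint' : Integrable (fun x => f' |x| ^ 2) μ) :
    ∫ x, (f |x| - f 0) ^ 2 ∂μ ≤ C * ∫ x, f' |x| ^ 2 ∂μ := by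
  have hodd : ∀ x ∈ s, HasDerivAt (oddExtension f) (f' |x|) x := fun x hx =>
    hasDerivAt_oddExtension (hf _ (abs_mem_of_balanced hs hx))
  simp only [← sq_oddExtension] at hint ⊢
  have hmeas := aemeasurable_of_hasDerivAt (measurableSet_of_balanced hs) hμ hodd
  exact (integral_sq_le_Var_of_odd (odd_oddExtension f)
    ((memLp_two_iff_integrable_sq hmeas.aestronglyMeasurable).2 hint)).trans
    (hP _ _ hodd hint hint')

lemma setLIntegral_Icc_sq_abs_le_lintegral_saturateDeriv (hP : PoincareOn μ s C) (hC : 0 ≤ C)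
    (hs : Balanced ℝ s) (hμ : ∀ᵐ x ∂μ, x ∈ s) (hf : ∀ x ∈ s, HasDerivAt f (f' x) x) {r κ : ℝ}
    (hr : r ∈ s) (hr₀ : 0 ≤ r) (hκ : 0 < κ)
    (hfin : ∫⁻ x, ENNReal.ofReal (saturateDeriv f' r κ |x| ^ 2) ∂μ ≠ ∞) :
    ∫⁻ x in Icc (-r) r, ENNReal.ofReal ((f |x| - f 0) ^ 2) ∂μ ≤
      ENNReal.ofReal C * ∫⁻ x, ENNReal.ofReal (saturateDeriv f' r κ |x| ^ 2) ∂μ := by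
  set F := saturate f f' r κ
  set F' := saturateDeriv f' r κ
  have hF : ∀ x ∈ s, HasDerivAt F (F' x) x := fun x hx =>
    hasDerivAt_saturate hκ.ne' fun _ => hf x hx
  have hFf : ∀ x ≤ r, F x = f x := fun x hx => if_pos hx
  have hmeas : AEMeasurable (fun x => F |x| - F 0) μ :=
    ((aemeasurable_of_hasDerivAt (measurableSet_of_balanced hs) hμ hF).comp_quasiMeasurePreserving
      quasiMeasurePreserving_abs).sub_const _
  have hmeas' : AEMeasurable (fun x => F' |x|) μ :=
    (aemeasurable_deriv_of_hasDerivAt hμ hF).comp_quasiMeasurePreserving quasiMeasurePreserving_abs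
  have hint : Integrable (fun x => (F |x| - F 0) ^ 2) μ := by
    have hfc : ContinuousOn f (Icc 0 r) := fun x hx => by
      have hxr : |x| ≤ |r| := by rw [abs_of_nonneg hx.1, abs_of_nonneg hr₀]; exact hx.2
      exact (hf x (balanced_real_iff.1 hs r hr x hxr)).continuousAt.continuousWithinAt
    obtain ⟨M, hM⟩ := exists_forall_abs_saturate_le (f' := f') hκ hfc
    exact (MemLp.of_bound hmeas.aestronglyMeasurable (M + M) (.of_forall fun x =>
      (abs_sub _ _).trans (add_le_add (hM _ (abs_nonneg x)) (hM 0 le_rfl)))).integrable_sq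
  have hint' : Integrable (fun x => F' |x| ^ 2) μ := (lintegral_ofReal_sq_ne_top_iff hmeas').1 hfin
  calc ∫⁻ x in Icc (-r) r, ENNReal.ofReal ((f |x| - f 0) ^ 2) ∂μ
      = ∫⁻ x in Icc (-r) r, ENNReal.ofReal ((F |x| - F 0) ^ 2) ∂μ :=
        setLIntegral_congr_fun measurableSet_Icc fun x hx => by
          simp only [hFf _ (abs_le.2 hx), hFf _ hr₀]
    _ ≤ ∫⁻ x, ENNReal.ofReal ((F |x| - F 0) ^ 2) ∂μ := setLIntegral_le_lintegral _ _
    _ = ENNReal.ofReal (∫ x, (F |x| - F 0) ^ 2 ∂μ) := (ofReal_integral_sq hint).symm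
    _ ≤ ENNReal.ofReal (C * ∫ x, F' |x| ^ 2 ∂μ) :=
        ENNReal.ofReal_le_ofReal (hP.integral_sq_abs_le hs hμ hF hint hint')
    _ = ENNReal.ofReal C * ∫⁻ x, ENNReal.ofReal (F' |x| ^ 2) ∂μ := by
        rw [ENNReal.ofReal_mul hC, ofReal_integral_sq hint']

lemma setLIntegral_Icc_sq_abs_le (hP : PoincareOn μ s C) (hC : 0 ≤ C) (hs : Balanced ℝ s)
    (hμ : ∀ᵐ x ∂μ, x ∈ s) (hf : ∀ x ∈ s, HasDerivAt f (f' x) x) {r : ℝ} (hr : r ∈ s) (hr₀ : 0 ≤ r)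
    (hfin : ∫⁻ x in Icc (-r) r, ENNReal.ofReal (f' |x| ^ 2) ∂μ ≠ ∞) :
    ∫⁻ x in Icc (-r) r, ENNReal.ofReal ((f |x| - f 0) ^ 2) ∂μ ≤
      ENNReal.ofReal C * ∫⁻ x in Icc (-r) r, ENNReal.ofReal (f' |x| ^ 2) ∂μ := by
  have htail := tendsto_setLIntegral_sq_mul_exp_neg (μ := μ) (s := (Icc (-r) r)ᶜ)
    (continuous_abs.measurable.sub_const r) measurableSet_Icc.compl
    (fun x hx => sub_pos.2 (not_le.1 (mt abs_le.1 hx))) (f' r)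
  have hlim := ENNReal.Tendsto.const_mul (htail.const_add
    (∫⁻ x in Icc (-r) r, ENNReal.ofReal (f' |x| ^ 2) ∂μ)) (.inr (ENNReal.ofReal_ne_top (r := C)))
  rw [add_zero] at hlim
  refine ge_of_tendsto hlim ?_
  filter_upwards [eventually_gt_atTop 0, htail.eventually_lt_const ENNReal.zero_lt_top]
    with κ hκ htail_lt
  rw [← lintegral_sq_saturateDeriv_abs]
  refine hP.setLIntegral_Icc_sq_abs_le_lintegral_saturateDeriv hC hs hμ hf hr hr₀ hκ ?_
  rw [lintegral_sq_saturateDeriv_abs]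
  exact ENNReal.add_ne_top.2 ⟨hfin, htail_lt.ne⟩

lemma setLIntegral_Icc_sq_le (hP : PoincareOn μ s C) (hC : 0 ≤ C) (hs : Balanced ℝ s)
    (hμ : ∀ᵐ x ∂μ, x ∈ s) (hf : ∀ x ∈ s, HasDerivAt f (f' x) x) {r : ℝ} (hr : r ∈ s) (hr₀ : 0 ≤ r)
    (hfin : ∫⁻ x in Icc (-r) r, ENNReal.ofReal (f' x ^ 2) ∂μ ≠ ∞) :
    ∫⁻ x in Icc (-r) r, ENNReal.ofReal ((f x - f 0) ^ 2) ∂μ ≤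
      ENNReal.ofReal C * ∫⁻ x in Icc (-r) r, ENNReal.ofReal (f' x ^ 2) ∂μ := by
  have : (μ.restrict (Icc (-r) r)).IsNegInvariant :=
    isNegInvariant_restrict_of_neg_eq measurableSet_Icc (by rw [neg_Icc, neg_neg])
  have hfold := two_mul_lintegral_eq_lintegral_abs_add (μ := μ.restrict (Icc (-r) r))
    (h := fun x => ENNReal.ofReal ((f x - f 0) ^ 2))
    (((aemeasurable_of_hasDerivAt (measurableSet_of_balanced hs) hμ hf).sub_const
      _).pow_const 2).ennreal_ofReal.restrict
  have hfold' := two_mul_lintegral_eq_lintegral_abs_add (μ := μ.restrict (Icc (-r) r))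
    (h := fun x => ENNReal.ofReal (f' x ^ 2))
    ((aemeasurable_deriv_of_hasDerivAt hμ hf).pow_const 2).ennreal_ofReal.restrict
  have hreflect : ∀ x ∈ s, HasDerivAt (fun y => f (-y)) (-f' (-x)) x := fun x hx =>
    ((hf (-x) (hs.neg_mem_iff.2 hx)).comp x (hasDerivAt_neg x)).congr_deriv (by ring)
  have hfin₂ := ENNReal.mul_ne_top (ENNReal.ofNat_ne_top (n := 2)) hfin
  rw [hfold'] at hfin₂
  obtain ⟨hfin_pos, hfin_neg⟩ := ENNReal.add_ne_top.1 hfin₂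
  have hpos := hP.setLIntegral_Icc_sq_abs_le hC hs hμ hf hr hr₀ hfin_pos
  have hneg := hP.setLIntegral_Icc_sq_abs_le hC hs hμ hreflect hr hr₀ (by simpa using hfin_neg)
  simp only [neg_zero, neg_sq] at hneg
  rw [← ENNReal.mul_le_mul_iff_right two_ne_zero ENNReal.ofNat_ne_top, hfold, mul_left_comm, hfold',
    mul_add]
  exact add_le_add hpos hneg

lemma setLIntegral_sq_le_of_balanced (hP : PoincareOn μ s C) (hC : 0 ≤ C) (hs : Balanced ℝ s)
    (hμ : ∀ᵐ x ∂μ, x ∈ s) (hf : ∀ x ∈ s, HasDerivAt f (f' x) x) {t : Set ℝ} (ht : Balanced ℝ t)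
    (hts : t ⊆ s) (hfin : ∫⁻ x in t, ENNReal.ofReal (f' x ^ 2) ∂μ ≠ ∞) :
    ∫⁻ x in t, ENNReal.ofReal ((f x - f 0) ^ 2) ∂μ ≤
      ENNReal.ofReal C * ∫⁻ x in t, ENNReal.ofReal (f' x ^ 2) ∂μ := by
  rw [← withDensity_apply' (fun x => ENNReal.ofReal ((f x - f 0) ^ 2))]
  refine measure_le_of_balanced_of_forall_Icc ht fun x hx => ?_
  have hle : ∫⁻ y in Icc (-|x|) |x|, ENNReal.ofReal (f' y ^ 2) ∂μ ≤
      ∫⁻ y in t, ENNReal.ofReal (f' y ^ 2) ∂μ :=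
    lintegral_mono_set (Icc_neg_abs_subset_of_balanced ht hx)
  rw [withDensity_apply']
  exact (hP.setLIntegral_Icc_sq_le hC hs hμ hf (abs_mem_of_balanced hs (hts hx)) (abs_nonneg x)
    (ne_top_of_le_ne_top hfin hle)).trans (mul_le_mul_right hle _)

variable {φ : ℝ → ℝ}

lemma lintegral_sq_withDensity_le (hP : PoincareOn μ s C) (hC : 0 ≤ C) (hs : Balanced ℝ s)
    (hμ : ∀ᵐ x ∂μ, x ∈ s) (hφ₀ : ∀ x ∈ s, 0 ≤ φ x) (hφ : SymmDecreasingOn φ s)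
    (hf : ∀ x ∈ s, HasDerivAt f (f' x) x)
    (hfin : ∫⁻ x, ENNReal.ofReal (f' x ^ 2) ∂(μ.withDensity fun x => ENNReal.ofReal (φ x)) ≠ ∞) :
    ∫⁻ x, ENNReal.ofReal ((f x - f 0) ^ 2) ∂(μ.withDensity fun x => ENNReal.ofReal (φ x)) ≤
      ENNReal.ofReal C *
        ∫⁻ x, ENNReal.ofReal (f' x ^ 2) ∂(μ.withDensity fun x => ENNReal.ofReal (φ x)) := by
  refine lintegral_withDensity_le_of_superlevel (hμ.mono hφ₀) (hφ.aemeasurable hs hμ)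
    (((aemeasurable_of_hasDerivAt (measurableSet_of_balanced hs) hμ hf).sub_const
      _).pow_const 2).ennreal_ofReal
    ((aemeasurable_deriv_of_hasDerivAt hμ hf).pow_const 2).ennreal_ofReal ENNReal.ofReal_ne_top hfin
    fun t _ hfin_level => ?_
  have hlevel : (s ∩ {x | t < φ x} : Set ℝ) =ᵐ[μ] ({x | t < φ x} : Set ℝ) :=
    hμ.mono fun x hx => propext (and_iff_right hx)
  rw [← setLIntegral_congr hlevel] at hfin_level
  rw [← setLIntegral_congr hlevel, ← setLIntegral_congr hlevel]
  exact hP.setLIntegral_sq_le_of_balanced hC hs hμ hf (hφ.balanced_superlevel hs t)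
    inter_subset_left hfin_level

theorem withDensity (hP : PoincareOn μ s C) (hC : 0 ≤ C) (hs : Balanced ℝ s)
    (hμ : ∀ᵐ x ∂μ, x ∈ s) (hφ₀ : ∀ x ∈ s, 0 ≤ φ x) (hφ : SymmDecreasingOn φ s) :
    PoincareOn (μ.withDensity fun x => ENNReal.ofReal (φ x)) s C := by
  intro f f' hf _ hint'
  set ν := μ.withDensity fun x => ENNReal.ofReal (φ x)
  have hν : ∀ᵐ x ∂ν, x ∈ s := (withDensity_absolutelyContinuous μ _).ae_le hμ
  have hmeas : AEMeasurable (fun x => f x - f 0) ν :=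
    (aemeasurable_of_hasDerivAt (measurableSet_of_balanced hs) hν hf).sub_const _
  have hfin : ∫⁻ x, ENNReal.ofReal (f' x ^ 2) ∂ν ≠ ∞ :=
    (lintegral_ofReal_sq_ne_top_iff (aemeasurable_deriv_of_hasDerivAt hν hf)).2 hint'
  have key := hP.lintegral_sq_withDensity_le hC hs hμ hφ₀ hφ hf hfin
  have hint : Integrable (fun x => (f x - f 0) ^ 2) ν := (lintegral_ofReal_sq_ne_top_iff hmeas).1
    (ne_top_of_le_ne_top (ENNReal.mul_ne_top ENNReal.ofReal_ne_top hfin) key)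
  rw [← ofReal_integral_sq hint, ← ofReal_integral_sq hint', ← ENNReal.ofReal_mul hC,
    ENNReal.ofReal_le_ofReal_iff (mul_nonneg hC (integral_nonneg fun _ => sq_nonneg _))] at key
  exact (Var_le_integral_sq_sub f (f 0)).trans key

end PoincareOn

lemma CP_nonneg (μ : Measure ℝ) (s : Set ℝ) : 0 ≤ CP μ s := Real.sInf_nonneg fun _ hC => hC.1

theorem stmt7_general {μ : Measure ℝ} [IsFiniteMeasure μ] [μ.IsNegInvariant] {s : Set ℝ}
    (hs : Balanced ℝ s) (hμ : ∀ᵐ x ∂μ, x ∈ s) {φ : ℝ → ℝ} (hφ₀ : ∀ x ∈ s, 0 ≤ φ x)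
    (hφ : SymmDecreasingOn φ s) (hP : ∃ C, 0 ≤ C ∧ PoincareOn μ s C) :
    CP (μ.withDensity fun x => ENNReal.ofReal (φ x)) s ≤ CP μ s :=
  csInf_le_csInf ⟨0, fun _ hC => hC.1⟩ hP fun _ hC => ⟨hC.1, hC.2.withDensity hC.1 hs hμ hφ₀ hφ⟩

/-- even, centrally-peaked perturbation of an even measure on a symmetric
interval does not increase the Poincaré constant. -/
theorem stmt7 (b : ℝ) (hb : 0 < b) (V : ℝ → ℝ)
    (hVc : ContinuousOn V (Set.Ioo (-b) b)) (hVeven : ∀ x, V (-x) = V x)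
    (μ : Measure ℝ)
    (hμ : μ = MeasureTheory.volume.withDensity fun t =>
      ENNReal.ofReal (Set.indicator (Set.Ioo (-b) b) (fun x => Real.exp (-(V x))) t))
    [IsProbabilityMeasure μ]
    (φ : ℝ → ℝ) (hφpos : ∀ x ∈ Set.Ioo (-b) b, 0 ≤ φ x)
    (hφeven : ∀ x, φ (-x) = φ x)
    (hφanti : AntitoneOn φ (Set.Ico 0 b))
    (μt : Measure ℝ) (hμt : μt = μ.withDensity fun t => ENNReal.ofReal (φ t))
    [IsProbabilityMeasure μt]
    (hCP : PoincareOn μ (Set.Ioo (-b) b) (CP μ (Set.Ioo (-b) b))) :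
    CP μt (Set.Ioo (-b) b) ≤ CP μ (Set.Ioo (-b) b) := by
  subst hμ hμt
  have hdensity : Function.Even fun t =>
      ENNReal.ofReal ((Ioo (-b) b).indicator (fun x => Real.exp (-(V x))) t) :=
    (even_indicator (balanced_Ioo_neg_self b).neg_eq fun x => by
      simp only [hVeven]).left_comp ENNReal.ofReal
  have := isNegInvariant_withDensity_of_even (μ := volume) hdensity
  exact stmt7_general (balanced_Ioo_neg_self b)
    (ae_mem_withDensity_ofReal_indicator _ measurableSet_Ioo _) hφpos
    (.of_even_of_antitoneOn hφeven hφanti) ⟨_, CP_nonneg _ _, hCP⟩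
end

section
/- Let n ≥ 1 and x₁ < ⋯ < x_n be the roots of the n-th Hermite polynomial H_n. Let I be one of the intervals (−∞, x₁], [x₁, x₂], …, [x_{n−1}, x_n], [x_n, +∞). Then the standard Gaussian measure restricted to I has Neumann spectral gap n+1, i.e. optimal Poincaré constant 1/(n+1). -/
open MeasureTheory Real Set

/-!
If `q` is an eigenfunction of a weighted Sturm–Liouville operator with eigenvalue `lam`, and `q'`
does not vanish on the interval, then `q` vanishes at a single point `z`. For `g` with `g z = 0`,
the derivative of `g² w q' / q` is `w (g'² - lam g² - (g' - g q' / q)²)` (Picone), and this function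
has the sign of `x - z`; integrating gives `lam ∫ w g² ≤ ∫ w g'²`. Testing the Poincaré inequality
on `q` itself gives optimality, as soon as `q` satisfies the Neumann condition.
Both apply to the Gaussian weight and `q = H_{n+1}`: here `q' = (n+1) H_n` has no zero between
consecutive roots of `H_n`, and vanishes at those roots, which is the Neumann condition.
-/

open Filter Topology

section Variance

variable {μ : Measure ℝ} {f : ℝ → ℝ}

lemma var_le_integral_sub_sq (μ : Measure ℝ) (f : ℝ → ℝ) (a : ℝ) :
    Var μ f ≤ ∫ x, (f x - a) ^ 2 ∂μ :=
  ciInf_le ⟨0, forall_mem_range.2 fun _ => integral_nonneg fun _ => sq_nonneg _⟩ a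

lemma integral_sub_sq_of_integral_eq_zero [IsFiniteMeasure μ] (hf : MemLp f 2 μ)
    (hmean : ∫ x, f x ∂μ = 0) (a : ℝ) :
    ∫ x, (f x - a) ^ 2 ∂μ = ∫ x, f x ^ 2 ∂μ + μ.real univ * a ^ 2 := by
  have hf1 : Integrable f μ := hf.integrable one_le_two
  have hf2 : Integrable (fun x => f x ^ 2) μ := hf.integrable_sq
  have expand : ∀ x, (f x - a) ^ 2 = f x ^ 2 - 2 * a * f x + a ^ 2 := fun x => by ring
  simp only [expand]
  have hlin : Integrable (fun x => f x ^ 2 - 2 * a * f x) μ := hf2.sub (hf1.const_mul _)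
  rw [integral_add hlin (integrable_const _),
    integral_sub hf2 (hf1.const_mul _), integral_const_mul, hmean, integral_const, mul_zero,
    sub_zero, smul_eq_mul]

lemma var_eq_integral_sq_of_integral_eq_zero [IsFiniteMeasure μ] (hf : MemLp f 2 μ)
    (hmean : ∫ x, f x ∂μ = 0) : Var μ f = ∫ x, f x ^ 2 ∂μ := by
  refine le_antisymm (by simpa using var_le_integral_sub_sq μ f 0) (le_ciInf fun a => ?_)
  rw [integral_sub_sq_of_integral_eq_zero hf hmean]
  exact le_add_of_nonneg_right (by positivity)

lemma var_smul_measure (c : ENNReal) (μ : Measure ℝ) (f : ℝ → ℝ) :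
    Var (c • μ) f = c.toReal * Var μ f := by
  simp only [Var, integral_smul_measure, smul_eq_mul, Real.mul_iInf_of_nonneg c.toReal_nonneg]

lemma poincareOn_smul_measure_iff {s : Set ℝ} {K : ℝ} {c : ENNReal} (hc : c ≠ 0) (hc' : c ≠ ⊤) :
    PoincareOn (c • μ) s K ↔ PoincareOn μ s K := by
  have hpos : 0 < c.toReal := ENNReal.toReal_pos hc hc'
  simp only [PoincareOn, integrable_smul_measure hc hc', var_smul_measure, integral_smul_measure,
    smul_eq_mul, mul_left_comm K, mul_le_mul_iff_right₀ hpos]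

lemma one_div_le_of_poincareOn [IsFiniteMeasure μ] {f' : ℝ → ℝ} {s : Set ℝ} {lam K : ℝ}
    (hlam : 0 < lam) (hf : ∀ x ∈ s, HasDerivAt f (f' x) x) (hf2 : MemLp f 2 μ)
    (hf'2 : Integrable (fun x => f' x ^ 2) μ) (hmean : ∫ x, f x ∂μ = 0)
    (henergy : ∫ x, f' x ^ 2 ∂μ = lam * ∫ x, f x ^ 2 ∂μ) (hpos : 0 < ∫ x, f' x ^ 2 ∂μ)
    (hK : PoincareOn μ s K) : 1 / lam ≤ K := by
  have hle : ∫ x, f x ^ 2 ∂μ ≤ K * ∫ x, f' x ^ 2 ∂μ :=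
    var_eq_integral_sq_of_integral_eq_zero hf2 hmean ▸ hK f f' hf hf2.integrable_sq hf'2
  refine le_of_mul_le_mul_right ?_ hpos
  rwa [henergy, one_div, inv_mul_cancel_left₀ hlam.ne', ← henergy]

end Variance

section Integration

variable {E : Type*} [NormedAddCommGroup E] [NormedSpace ℝ E]

lemma integrableOn_withDensity_ofReal_iff {α : Type*} {mα : MeasurableSpace α} {μ : Measure α}
    {s : Set α} (hs : MeasurableSet s) {w : α → ℝ} (hw : Measurable w)
    (hw0 : ∀ x ∈ s, 0 ≤ w x) {g : α → E} :
    IntegrableOn g s (μ.withDensity fun x => ENNReal.ofReal (w x)) ↔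
      IntegrableOn (fun x => w x • g x) s μ := by
  rw [IntegrableOn, restrict_withDensity hs,
    integrable_withDensity_iff_integrable_smul' hw.ennreal_ofReal (by simp)]
  exact integrableOn_congr_fun (fun x hx => by simp only [ENNReal.toReal_ofReal (hw0 x hx)]) hs

lemma setIntegral_withDensity_ofReal {α : Type*} {mα : MeasurableSpace α} {μ : Measure α}
    {s : Set α} (hs : MeasurableSet s) {w : α → ℝ} (hw : Measurable w)
    (hw0 : ∀ x ∈ s, 0 ≤ w x) (g : α → E) :
    ∫ x in s, g x ∂(μ.withDensity fun x => ENNReal.ofReal (w x)) = ∫ x in s, w x • g x ∂μ := by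
  rw [setIntegral_withDensity_eq_setIntegral_toReal_smul hw.ennreal_ofReal (by simp) g hs]
  exact setIntegral_congr_fun hs fun x hx => by simp only [ENNReal.toReal_ofReal (hw0 x hx)]

lemma setIntegral_nonneg_of_forall_Icc {μ : Measure ℝ} {g : ℝ → ℝ} {s : Set ℝ}
    (hs : s.OrdConnected) {z : ℝ} (hz : z ∈ s) (hg : IntegrableOn g s μ)
    (h : ∀ c ∈ s, ∀ d ∈ s, c ≤ z → z ≤ d → 0 ≤ ∫ x in Icc c d, g x ∂μ) :
    0 ≤ ∫ x in s, g x ∂μ := by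
  have : Nonempty s := ⟨⟨z, hz⟩⟩
  have hcover : AECover (μ.restrict s) ((atBot : Filter s) ×ˢ (atTop : Filter s))
      fun I => Icc (I.1 : ℝ) I.2 :=
    { ae_eventually_mem := (ae_restrict_mem hs.measurableSet).mono fun x hx =>
        (tendsto_fst.eventually (eventually_le_atBot (⟨x, hx⟩ : s))).and
          (tendsto_snd.eventually (eventually_ge_atTop (⟨x, hx⟩ : s)))
      measurableSet := fun _ => measurableSet_Icc }
  refine ge_of_tendsto (hcover.integral_tendsto_of_countably_generated hg) ?_
  filter_upwards [tendsto_fst.eventually (eventually_le_atBot (⟨z, hz⟩ : s)),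
    tendsto_snd.eventually (eventually_ge_atTop (⟨z, hz⟩ : s))] with I hIz hzI
  rw [Measure.restrict_restrict measurableSet_Icc,
    inter_eq_self_of_subset_left (hs.out I.1.2 I.2.2)]
  exact h _ I.1.2 _ I.2.2 hIz hzI

lemma hasDerivAt_indicator_of_notMem_frontier {F F' : ℝ → E} {s : Set ℝ} {x : ℝ}
    (hF : HasDerivAt F (F' x) x) (hx : x ∉ frontier s) :
    HasDerivAt (s.indicator F) (s.indicator F' x) x := by
  rw [← mem_compl_iff, compl_frontier_eq_union_interior] at hx
  rcases hx with hint | hext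
  · rw [indicator_of_mem (interior_subset hint)]
    exact hF.congr_of_eventuallyEq (eventually_of_mem (mem_interior_iff_mem_nhds.1 hint)
      fun y hy => indicator_of_mem hy F)
  · rw [indicator_of_notMem (interior_subset hext)]
    exact (hasDerivAt_const x 0).congr_of_eventuallyEq (eventually_of_mem
      (mem_interior_iff_mem_nhds.1 hext) fun y hy => indicator_of_notMem hy F)

lemma setIntegral_eq_zero_of_hasDerivAt_of_frontier [CompleteSpace E] {F F' : ℝ → E} {s : Set ℝ}
    (hs : MeasurableSet s) (hcount : (frontier s).Countable) (hF : ∀ x, HasDerivAt F (F' x) x)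
    (hfront : ∀ x ∈ frontier s, F x = 0) (hint : IntegrableOn F' s)
    (hbot : Tendsto F atBot (𝓝 0)) (htop : Tendsto F atTop (𝓝 0)) :
    ∫ x in s, F' x = 0 := by
  have hG' : Integrable (s.indicator F') := (integrable_indicator_iff hs).2 hint
  have hcont : Continuous (s.indicator F) :=
    (continuous_iff_continuousAt.2 fun x => (hF x).continuousAt).indicator hfront
  have hFTC : ∀ r : ℝ, ∫ x in -r..r, s.indicator F' x = s.indicator F r - s.indicator F (-r) :=
    fun r => integral_eq_of_hasDerivAt_off_countable _ _ hcount hcont.continuousOn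
      (fun x hx => hasDerivAt_indicator_of_notMem_frontier (hF x) hx.2) hG'.intervalIntegrable
  have hlim := intervalIntegral_tendsto_integral hG' tendsto_neg_atTop_atBot tendsto_id
  have hzero : Tendsto (fun r => s.indicator F r - s.indicator F (-r)) atTop (𝓝 0) := by
    have hle : ∀ r, ‖s.indicator F r‖ ≤ ‖F r‖ := fun r => norm_indicator_le_norm_self F r
    simpa using (squeeze_zero_norm hle (by simpa using htop.norm)).sub
      ((squeeze_zero_norm hle (by simpa using hbot.norm)).comp tendsto_neg_atTop_atBot)
  rw [← integral_indicator hs]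
  exact tendsto_nhds_unique (hlim.congr hFTC) hzero

lemma setIntegral_pos_of_isOpen {X : Type*} [TopologicalSpace X] [MeasurableSpace X]
    [OpensMeasurableSpace X] {μ : Measure X} [μ.IsOpenPosMeasure] {g : X → ℝ} {s : Set X}
    (hs : IsOpen s) (hne : s.Nonempty) (hg : IntegrableOn g s μ) (hpos : ∀ x ∈ s, 0 < g x) :
    0 < ∫ x in s, g x ∂μ := by
  rw [setIntegral_pos_iff_support_of_nonneg_ae
    ((ae_restrict_mem hs.measurableSet).mono fun x hx => (hpos x hx).le) hg,
    inter_eq_self_of_subset_right (show s ⊆ Function.support g from fun x hx => (hpos x hx).ne')]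
  exact hs.measure_pos μ hne

end Integration

section Picone

lemma sub_mul_sub_mul_deriv_pos {q q' : ℝ → ℝ} {s : Set ℝ} (hs : s.OrdConnected)
    (hq : ∀ x ∈ s, HasDerivAt q (q' x) x) (hq' : ∀ x ∈ s, q' x ≠ 0) {x z : ℝ} (hx : x ∈ s)
    (hz : z ∈ s) (hxz : x ≠ z) : 0 < (x - z) * ((q x - q z) * q' x) := by
  have hconv : Convex ℝ s := hs.convex
  have hcont : ContinuousOn q s := HasDerivAt.continuousOn hq
  have hint : ∀ y ∈ interior s, HasDerivWithinAt q (q' y) (interior s) y := fun y hy =>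
    (hq y (interior_subset hy)).hasDerivWithinAt
  rcases hasDerivWithinAt_forall_lt_or_forall_gt_of_forall_ne hconv
    (fun y hy => (hq y hy).hasDerivWithinAt) hq' with hneg | hpos
  · have hanti : StrictAntiOn q s := strictAntiOn_of_hasDerivWithinAt_neg hconv hcont hint
      fun y hy => hneg y (interior_subset hy)
    rcases hxz.lt_or_gt with hlt | hgt
    · exact mul_pos_of_neg_of_neg (sub_neg.2 hlt)
        (mul_neg_of_pos_of_neg (sub_pos.2 (hanti hx hz hlt)) (hneg x hx))
    · exact mul_pos (sub_pos.2 hgt)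
        (mul_pos_of_neg_of_neg (sub_neg.2 (hanti hz hx hgt)) (hneg x hx))
  · have hmono : StrictMonoOn q s := strictMonoOn_of_hasDerivWithinAt_pos hconv hcont hint
      fun y hy => hpos y (interior_subset hy)
    rcases hxz.lt_or_gt with hlt | hgt
    · exact mul_pos_of_neg_of_neg (sub_neg.2 hlt)
        (mul_neg_of_neg_of_pos (sub_neg.2 (hmono hx hz hlt)) (hpos x hx))
    · exact mul_pos (sub_pos.2 hgt) (mul_pos (sub_pos.2 (hmono hz hx hgt)) (hpos x hx))

/-- `q`, with derivative `q'`, satisfies `L q = -lam q` on `s`, where `L f = (w f')' / w` is the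
weighted Laplacian of density `w`; for the Gaussian density this is `L f = f'' - x f'`. The equation
is recorded in divergence form, so that `w` need not be differentiable. -/
structure IsEigenfunctionOn (w q q' : ℝ → ℝ) (lam : ℝ) (s : Set ℝ) : Prop where
  hasDerivAt : ∀ x ∈ s, HasDerivAt q (q' x) x
  hasDerivAt_flux : ∀ x ∈ s, HasDerivAt (fun y => w y * q' y) (-(lam * (w x * q x))) x

/-- The function `g² w q' / q` whose derivative appears in the Picone identity. It takes the junk
value `0` at the zeros of `q`, which is its limit there when `g` vanishes too. -/
noncomputable def piconeFlux (w q q' g : ℝ → ℝ) (x : ℝ) : ℝ :=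
  g x ^ 2 * (w x * q' x) / q x

namespace IsEigenfunctionOn

variable {w q q' g g' : ℝ → ℝ} {lam z : ℝ} {s : Set ℝ}

lemma hasDerivAt_piconeFlux (h : IsEigenfunctionOn w q q' lam s) {x : ℝ} (hx : x ∈ s)
    (hqx : q x ≠ 0) (hg : HasDerivAt g (g' x) x) :
    HasDerivAt (piconeFlux w q q' g)
      (w x * (g' x ^ 2 - lam * g x ^ 2 - (g' x - g x * (q' x / q x)) ^ 2)) x := by
  refine (((hg.pow 2).mul (h.hasDerivAt_flux x hx)).div (h.hasDerivAt x hx) hqx).congr_deriv ?_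
  simp only [Pi.mul_apply, Pi.pow_apply]
  field_simp
  push_cast
  ring

lemma hasDerivAt_piconeFlux_of_eq_zero (h : IsEigenfunctionOn w q q' lam s) (hz : z ∈ s)
    (hqz : q z = 0) (hq'z : q' z ≠ 0) (hgz : g z = 0) (hg : HasDerivAt g (g' z) z) :
    HasDerivAt (piconeFlux w q q' g) (w z * g' z ^ 2) z := by
  have hslope : slope (piconeFlux w q q' g) z =
      fun x => slope g z x ^ 2 * (w x * q' x) / slope q z x := by
    ext x
    simp only [slope_def_field, piconeFlux, hqz, hgz, sub_zero, div_zero]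
    rcases eq_or_ne x z with rfl | hxz
    · simp
    · have := sub_ne_zero.2 hxz
      rcases eq_or_ne (q x) 0 with hqx | hqx
      · simp [hqx]
      · field_simp
  have hflux : Tendsto (fun x => w x * q' x) (𝓝[≠] z) (𝓝 (w z * q' z)) :=
    (h.hasDerivAt_flux z hz).continuousAt.tendsto.mono_left nhdsWithin_le_nhds
  have hlim := ((hg.tendsto_slope.pow 2).mul hflux).div (h.hasDerivAt z hz).tendsto_slope hq'z
  have hvalue : g' z ^ 2 * (w z * q' z) / q' z = w z * g' z ^ 2 := by field_simp
  rw [hasDerivAt_iff_tendsto_slope, hslope, ← hvalue]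
  exact hlim

lemma exists_hasDerivAt_piconeFlux_le (h : IsEigenfunctionOn w q q' lam s)
    (hw : ∀ x ∈ s, 0 ≤ w x) (hq : ∀ x ∈ s, q x = 0 → g x = 0 ∧ q' x ≠ 0)
    {x : ℝ} (hx : x ∈ s) (hg : HasDerivAt g (g' x) x) :
    ∃ D, HasDerivAt (piconeFlux w q q' g) D x ∧ D ≤ w x * (g' x ^ 2 - lam * g x ^ 2) := by
  by_cases hqx : q x = 0
  · obtain ⟨hgx, hq'x⟩ := hq x hx hqx
    exact ⟨_, h.hasDerivAt_piconeFlux_of_eq_zero hx hqx hq'x hgx hg, by simp [hgx]⟩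
  · exact ⟨_, h.hasDerivAt_piconeFlux hx hqx hg,
      mul_le_mul_of_nonneg_left (sub_le_self _ (sq_nonneg _)) (hw x hx)⟩

lemma sub_mul_piconeFlux_nonneg (h : IsEigenfunctionOn w q q' lam s) (hs : s.OrdConnected)
    (hw : ∀ x ∈ s, 0 ≤ w x) (hq' : ∀ x ∈ s, q' x ≠ 0) (hz : z ∈ s) (hqz : q z = 0) {x : ℝ}
    (hx : x ∈ s) : 0 ≤ (x - z) * piconeFlux w q q' g x := by
  rcases eq_or_ne x z with rfl | hxz
  · simp
  have hsign : 0 < (x - z) * (q x * q' x) := by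
    simpa [hqz] using sub_mul_sub_mul_deriv_pos hs h.hasDerivAt hq' hx hz hxz
  have hwx := hw x hx
  calc 0 ≤ g x ^ 2 * w x * ((x - z) * (q x * q' x)) / q x ^ 2 := by positivity
    _ = (x - z) * piconeFlux w q q' g x := by
      unfold piconeFlux
      rcases eq_or_ne (q x) 0 with hqx | hqx
      · simp [hqx]
      · field_simp

lemma setIntegral_weight_mul_nonneg (h : IsEigenfunctionOn w q q' lam s) (hs : s.OrdConnected)
    (hw : ∀ x ∈ s, 0 ≤ w x) (hq' : ∀ x ∈ s, q' x ≠ 0) (hz : z ∈ s) (hqz : q z = 0)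
    (hg : ∀ x ∈ s, HasDerivAt g (g' x) x) (hgz : g z = 0)
    (hint : IntegrableOn (fun x => w x * (g' x ^ 2 - lam * g x ^ 2)) s) :
    0 ≤ ∫ x in s, w x * (g' x ^ 2 - lam * g x ^ 2) := by
  have hzero : ∀ x ∈ s, q x = 0 → g x = 0 ∧ q' x ≠ 0 := fun x hx hqx => by
    have : x = z := by
      by_contra hxz
      simpa [hqx, hqz] using sub_mul_sub_mul_deriv_pos hs h.hasDerivAt hq' hx hz hxz
    exact ⟨this ▸ hgz, hq' x hx⟩
  choose! D hD hDle using fun x hx => h.exists_hasDerivAt_piconeFlux_le hw hzero hx (hg x hx)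
  have hsign := fun x hx => h.sub_mul_piconeFlux_nonneg (g := g) hs hw hq' hz hqz (x := x) hx
  have hflux_z : piconeFlux w q q' g z = 0 := by simp [piconeFlux, hqz]
  refine setIntegral_nonneg_of_forall_Icc hs hz hint fun c hc d hd hcz hzd => ?_
  have hsub : Icc c d ⊆ s := hs.out hc hd
  have hflux_d : 0 ≤ piconeFlux w q q' g d := by
    rcases hzd.eq_or_lt with rfl | hlt
    · exact hflux_z.ge
    · exact nonneg_of_mul_nonneg_right (hsign d hd) (sub_pos.2 hlt)
  have hflux_c : piconeFlux w q q' g c ≤ 0 := by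
    rcases hcz.eq_or_lt with rfl | hlt
    · exact hflux_z.le
    · exact nonpos_of_mul_nonneg_right (hsign c hc) (sub_neg.2 hlt)
  rw [integral_Icc_eq_integral_Ioc, ← intervalIntegral.integral_of_le (hcz.trans hzd)]
  exact (sub_nonneg.2 (hflux_c.trans hflux_d)).trans
    (intervalIntegral.sub_le_integral_of_hasDeriv_right_of_le (hcz.trans hzd)
      (fun x hx => (hD x (hsub hx)).continuousAt.continuousWithinAt)
      (fun x hx => (hD x (hsub (Ioo_subset_Icc_self hx))).hasDerivWithinAt)
      (hint.mono_set hsub) fun x hx => hDle x (hsub (Ioo_subset_Icc_self hx)))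

theorem poincareOn_withDensity (h : IsEigenfunctionOn w q q' lam s) (hlam : 0 < lam)
    (hs : s.OrdConnected) (hwm : Measurable w) (hw : ∀ x ∈ s, 0 ≤ w x)
    [IsFiniteMeasure ((volume.withDensity fun x => ENNReal.ofReal (w x)).restrict s)]
    (hq' : ∀ x ∈ s, q' x ≠ 0) (hz : z ∈ s) (hqz : q z = 0) :
    PoincareOn ((volume.withDensity fun x => ENNReal.ofReal (w x)).restrict s) s (1 / lam) := by
  intro f f' hf hf2 hf'2
  set μ := (volume.withDensity fun x => ENNReal.ofReal (w x)).restrict s with hμ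
  have hg : ∀ x ∈ s, HasDerivAt (fun y => f y - f z) (f' x) x := fun x hx =>
    (hf x hx).sub_const (f z)
  have hfm : AEStronglyMeasurable f μ :=
    (HasDerivAt.continuousOn hf).aestronglyMeasurable hs.measurableSet
  have hg2 : Integrable (fun x => (f x - f z) ^ 2) μ :=
    (((memLp_two_iff_integrable_sq hfm).2 hf2).sub (memLp_const (f z))).integrable_sq
  have hint : Integrable (fun x => f' x ^ 2 - lam * (f x - f z) ^ 2) μ :=
    hf'2.sub (hg2.const_mul lam)
  have hpicone : 0 ≤ ∫ x, f' x ^ 2 - lam * (f x - f z) ^ 2 ∂μ := by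
    rw [hμ, setIntegral_withDensity_ofReal hs.measurableSet hwm hw]
    exact h.setIntegral_weight_mul_nonneg hs hw hq' hz hqz hg (sub_self _)
      ((integrableOn_withDensity_ofReal_iff hs.measurableSet hwm hw).1 hint)
  rw [integral_sub hf'2 (hg2.const_mul lam), integral_const_mul, sub_nonneg] at hpicone
  calc Var μ f ≤ ∫ x, (f x - f z) ^ 2 ∂μ := var_le_integral_sub_sq μ f (f z)
    _ ≤ 1 / lam * ∫ x, f' x ^ 2 ∂μ := by rwa [one_div, le_inv_mul_iff₀ hlam]

end IsEigenfunctionOn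

end Picone

section NodalInterval

/-- A nodal interval of `u`: a nonempty open interval, possibly unbounded, on which `u` has no zero
and whose finite endpoints are zeros of `u`. For continuous `u` these are the connected components
of `{u ≠ 0}`. -/
structure IsNodalInterval (u : ℝ → ℝ) (s : Set ℝ) : Prop where
  isOpen : IsOpen s
  ordConnected : s.OrdConnected
  nonempty : s.Nonempty
  ne_zero : ∀ y ∈ s, u y ≠ 0
  eq_zero_of_mem_frontier : ∀ y ∈ frontier s, u y = 0

variable {ι : Type*} [LinearOrder ι] {x : ι → ℝ} {u : ℝ → ℝ} {i j : ι}

lemma isNodalInterval_Iio (hx : StrictMono x) (hu : ∀ y, u y = 0 ↔ ∃ i, y = x i) (hi : IsBot i) :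
    IsNodalInterval u (Iio (x i)) where
  isOpen := isOpen_Iio
  ordConnected := ordConnected_Iio
  nonempty := nonempty_Iio
  ne_zero y hy h0 := by
    obtain ⟨k, rfl⟩ := (hu y).1 h0
    exact (hi k).not_gt (hx.lt_iff_lt.1 hy)
  eq_zero_of_mem_frontier y hy := (hu y).2 ⟨i, by simpa using hy⟩

lemma isNodalInterval_Ioi (hx : StrictMono x) (hu : ∀ y, u y = 0 ↔ ∃ i, y = x i) (hi : IsTop i) :
    IsNodalInterval u (Ioi (x i)) where
  isOpen := isOpen_Ioi
  ordConnected := ordConnected_Ioi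
  nonempty := nonempty_Ioi
  ne_zero y hy h0 := by
    obtain ⟨k, rfl⟩ := (hu y).1 h0
    exact (hi k).not_gt (hx.lt_iff_lt.1 hy)
  eq_zero_of_mem_frontier y hy := (hu y).2 ⟨i, by simpa using hy⟩

lemma isNodalInterval_Ioo (hx : StrictMono x) (hu : ∀ y, u y = 0 ↔ ∃ i, y = x i) (hij : i ⋖ j) :
    IsNodalInterval u (Ioo (x i) (x j)) where
  isOpen := isOpen_Ioo
  ordConnected := ordConnected_Ioo
  nonempty := nonempty_Ioo.2 (hx hij.lt)
  ne_zero y hy h0 := by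
    obtain ⟨k, rfl⟩ := (hu y).1 h0
    exact hij.2 (hx.lt_iff_lt.1 hy.1) (hx.lt_iff_lt.1 hy.2)
  eq_zero_of_mem_frontier y hy := by
    rw [frontier_Ioo (hx hij.lt)] at hy
    exact (hu y).2 (hy.elim (fun h => ⟨i, h⟩) fun h => ⟨j, h⟩)

end NodalInterval

section Gaussian

open Polynomial ProbabilityTheory

lemma isOpenPosMeasure_gaussianReal (m : ℝ) {v : NNReal} (hv : v ≠ 0) :
    (gaussianReal m v).IsOpenPosMeasure :=
  (gaussianReal_absolutelyContinuous' m hv).isOpenPosMeasure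

lemma gaussianReal_eq_withDensity_ofReal (m : ℝ) {v : NNReal} (hv : v ≠ 0) :
    gaussianReal m v = volume.withDensity fun x => ENNReal.ofReal (gaussianPDFReal m v x) :=
  gaussianReal_of_var_ne_zero m hv

lemma hasDerivAt_gaussianPDFReal (m : ℝ) (v : NNReal) (x : ℝ) :
    HasDerivAt (gaussianPDFReal m v) (-((x - m) / v) * gaussianPDFReal m v x) x := by
  have hexponent : HasDerivAt (fun y : ℝ => -(y - m) ^ 2 / (2 * v)) (-((x - m) / v)) x := by
    refine ((((hasDerivAt_id x).sub_const m).pow 2).neg.div_const (2 * (v : ℝ))).congr_deriv ?_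
    simp only [id_eq, Nat.cast_ofNat, Nat.add_one_sub_one, pow_one, mul_one]
    rw [neg_div, mul_div_mul_left _ _ two_ne_zero]
  rw [gaussianPDFReal_def]
  exact (hexponent.exp.const_mul _).congr_deriv (by ring)

variable {R : Type*} [CommRing R] [Algebra R ℝ]

lemma integrable_aeval_gaussianReal (m : ℝ) (v : NNReal) (p : R[X]) :
    Integrable (fun x => aeval x p) (gaussianReal m v) := by
  simp only [aeval_eq_sum_range, Algebra.smul_def]
  refine integrable_finsetSum _ fun i _ => Integrable.const_mul ?_ _
  have hnorm : Integrable (fun x => ‖id x‖ ^ i) (gaussianReal m v) :=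
    MemLp.integrable_norm_pow' (by exact_mod_cast memLp_id_gaussianReal (i : NNReal))
  exact hnorm.mono' (by fun_prop) (ae_of_all _ fun x => (norm_pow x i).le)

lemma integrable_aeval_sq_gaussianReal (m : ℝ) (v : NNReal) (p : R[X]) :
    Integrable (fun x => aeval x p ^ 2) (gaussianReal m v) :=
  (integrable_aeval_gaussianReal m v (p ^ 2)).congr (ae_of_all _ fun x => map_pow (aeval x) p 2)

lemma integrable_gaussianPDFReal_mul_aeval (m : ℝ) {v : NNReal} (hv : v ≠ 0) (p : R[X]) :
    Integrable fun x => gaussianPDFReal m v x * aeval x p := by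
  have hint := integrable_aeval_gaussianReal m v p
  rwa [gaussianReal_eq_withDensity_ofReal m hv, ← integrableOn_univ,
    integrableOn_withDensity_ofReal_iff .univ (measurable_gaussianPDFReal m v)
      fun x _ => gaussianPDFReal_nonneg m v x, integrableOn_univ] at hint

lemma hasDerivAt_gaussianPDFReal_mul_aeval (p : R[X]) (x : ℝ) :
    HasDerivAt (fun y => gaussianPDFReal 0 1 y * aeval y p)
      (gaussianPDFReal 0 1 x * aeval x (derivative p - X * p)) x := by
  refine ((hasDerivAt_gaussianPDFReal 0 1 x).mul (p.hasDerivAt_aeval x)).congr_deriv ?_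
  simp only [map_sub, map_mul, aeval_X, sub_zero, NNReal.coe_one, div_one]
  ring

lemma setIntegral_gaussianReal_aeval_eq_zero {s : Set ℝ} (hs : MeasurableSet s)
    (hcount : (frontier s).Countable) {p : R[X]} (hp : ∀ x ∈ frontier s, aeval x p = 0) :
    ∫ x in s, aeval x (derivative p - X * p) ∂(gaussianReal 0 1) = 0 := by
  have hF := hasDerivAt_gaussianPDFReal_mul_aeval p
  have hint := integrable_gaussianPDFReal_mul_aeval 0 one_ne_zero p
  have hint' := integrable_gaussianPDFReal_mul_aeval 0 one_ne_zero (derivative p - X * p)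
  rw [gaussianReal_eq_withDensity_ofReal 0 one_ne_zero, setIntegral_withDensity_ofReal hs
    (measurable_gaussianPDFReal 0 1) fun x _ => gaussianPDFReal_nonneg 0 1 x]
  exact setIntegral_eq_zero_of_hasDerivAt_of_frontier hs hcount hF
    (fun x hx => by rw [hp x hx, mul_zero]) hint'.integrableOn
    (tendsto_zero_of_hasDerivAt_of_integrableOn_Iic (a := 0) (fun x _ => hF x)
      hint'.integrableOn hint.integrableOn)
    (tendsto_zero_of_hasDerivAt_of_integrableOn_Ioi (a := 0) (fun x _ => hF x)
      hint'.integrableOn hint.integrableOn)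

end Gaussian

section Hermite

open Polynomial ProbabilityTheory

lemma derivative_hermite (n : ℕ) : derivative (hermite n) = X * hermite n - hermite (n + 1) := by
  rw [hermite_succ, sub_sub_cancel]

lemma derivative_hermite_succ (n : ℕ) :
    derivative (hermite (n + 1)) = ((n + 1 : ℕ) : ℤ[X]) * hermite n := by
  induction n with
  | zero => simp
  | succ n ih =>
    rw [hermite_succ (n + 1), ih]
    simp only [derivative_sub, derivative_mul, derivative_X, derivative_natCast, ih,
      derivative_hermite n]
    push_cast
    ring

lemma isEigenfunctionOn_hermite (n : ℕ) (s : Set ℝ) :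
    IsEigenfunctionOn (gaussianPDFReal 0 1) (fun x => aeval x (hermite (n + 1)))
      (fun x => (n + 1) * aeval x (hermite n)) (n + 1) s where
  hasDerivAt x _ := by
    simpa only [derivative_hermite_succ, map_mul, map_natCast, map_add, map_one,
      Nat.cast_add_one] using
      (hermite (n + 1)).hasDerivAt_aeval x
  hasDerivAt_flux x _ := by
    have hflux := (hasDerivAt_gaussianPDFReal_mul_aeval (hermite n) x).const_mul (n + 1 : ℝ)
    simp only [derivative_hermite, sub_sub_cancel_left, map_neg, mul_neg] at hflux
    simpa only [mul_left_comm (n + 1 : ℝ)] using hflux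

variable {n : ℕ} {s : Set ℝ}

lemma IsNodalInterval.countable_frontier_of_hermite
    (hs : IsNodalInterval (fun x => aeval x (hermite n)) s) : (frontier s).Countable :=
  ((hermite n).rootSet_finite ℝ).countable.mono fun x hx => mem_rootSet'.2
    ⟨((hermite_monic n).map _).ne_zero, hs.eq_zero_of_mem_frontier x hx⟩

lemma setIntegral_hermite_succ (hs : IsNodalInterval (fun x => aeval x (hermite n)) s) :
    ∫ x in s, aeval x (hermite (n + 1)) ∂(gaussianReal 0 1) = 0 := by
  simpa only [derivative_hermite, sub_sub_cancel_left, map_neg, integral_neg, neg_eq_zero] using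
    setIntegral_gaussianReal_aeval_eq_zero hs.isOpen.measurableSet
      hs.countable_frontier_of_hermite hs.eq_zero_of_mem_frontier

lemma setIntegral_sq_hermite_succ (hs : IsNodalInterval (fun x => aeval x (hermite n)) s) :
    ∫ x in s, aeval x (hermite (n + 1)) ^ 2 ∂(gaussianReal 0 1) =
      (n + 1) * ∫ x in s, aeval x (hermite n) ^ 2 ∂(gaussianReal 0 1) := by
  set p := hermite (n + 1) * hermite n with hp
  have hdiv : derivative p - X * p =
      ((n + 1 : ℕ) : ℤ[X]) * hermite n ^ 2 - hermite (n + 1) ^ 2 := by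
    rw [hp, derivative_mul, derivative_hermite_succ, derivative_hermite]
    ring
  have hzero : ∫ x in s, aeval x (derivative p - X * p) ∂(gaussianReal 0 1) = 0 :=
    setIntegral_gaussianReal_aeval_eq_zero hs.isOpen.measurableSet hs.countable_frontier_of_hermite
      fun x hx => by rw [hp, map_mul, hs.eq_zero_of_mem_frontier x hx, mul_zero]
  simp only [hdiv, map_sub, map_mul, map_pow, map_natCast, map_add, map_one, Nat.cast_add_one]
    at hzero
  rw [integral_sub ((integrable_aeval_sq_gaussianReal 0 1 _).integrableOn.const_mul _)
    (integrable_aeval_sq_gaussianReal 0 1 _).integrableOn, integral_const_mul, sub_eq_zero] at hzero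
  exact hzero.symm

lemma exists_aeval_hermite_succ_eq_zero
    (hs : IsNodalInterval (fun x => aeval x (hermite n)) s) :
    ∃ z ∈ s, aeval z (hermite (n + 1)) = (0 : ℝ) := by
  have := isOpenPosMeasure_gaussianReal 0 one_ne_zero
  obtain ⟨z, hz, hmean⟩ := exists_eq_setAverage (f := fun x : ℝ => aeval x (hermite (n + 1)))
    ⟨hs.nonempty, hs.ordConnected.isPreconnected⟩ (by fun_prop)
    (integrable_aeval_gaussianReal 0 1 _).integrableOn (measure_ne_top _ _)
    (hs.isOpen.measure_pos (gaussianReal 0 1) hs.nonempty).ne'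
  exact ⟨z, hz, by rw [hmean, setAverage_eq, setIntegral_hermite_succ hs, smul_zero]⟩

theorem poincareOn_restrict_gaussianReal_of_isNodalInterval
    (hs : IsNodalInterval (fun x => aeval x (hermite n)) s) :
    PoincareOn ((gaussianReal 0 1).restrict s) s (1 / (n + 1)) := by
  obtain ⟨z, hz, hqz⟩ := exists_aeval_hermite_succ_eq_zero hs
  have hn : (0 : ℝ) < n + 1 := by positivity
  have hdens := gaussianReal_eq_withDensity_ofReal 0 one_ne_zero
  have : IsFiniteMeasure ((volume.withDensity
      fun x => ENNReal.ofReal (gaussianPDFReal 0 1 x)).restrict s) := by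
    rw [← hdens]
    infer_instance
  rw [hdens]
  exact (isEigenfunctionOn_hermite n s).poincareOn_withDensity hn hs.ordConnected
    (measurable_gaussianPDFReal 0 1) (fun x _ => gaussianPDFReal_nonneg 0 1 x)
    (fun x hx => mul_ne_zero hn.ne' (hs.ne_zero x hx)) hz hqz

theorem isLeast_poincareOn_restrict_gaussianReal
    (hs : IsNodalInterval (fun x => aeval x (hermite n)) s) :
    IsLeast {K | PoincareOn ((gaussianReal 0 1).restrict s) s K} (1 / (n + 1)) := by
  refine ⟨poincareOn_restrict_gaussianReal_of_isNodalInterval hs, fun K hK => ?_⟩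
  have := isOpenPosMeasure_gaussianReal 0 one_ne_zero
  have hn : (0 : ℝ) < n + 1 := by positivity
  have hp2 := (integrable_aeval_sq_gaussianReal 0 1 (hermite n)).integrableOn (s := s)
  have hq2 := (integrable_aeval_sq_gaussianReal 0 1 (hermite (n + 1))).integrableOn (s := s)
  have hpos : 0 < ∫ x in s, aeval x (hermite n) ^ 2 ∂(gaussianReal 0 1) :=
    setIntegral_pos_of_isOpen hs.isOpen hs.nonempty hp2 fun x hx =>
      sq_pos_of_ne_zero (hs.ne_zero x hx)
  refine one_div_le_of_poincareOn hn (isEigenfunctionOn_hermite n s).hasDerivAt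
    ((memLp_two_iff_integrable_sq (by fun_prop)).2 hq2) ?_ (setIntegral_hermite_succ hs) ?_ ?_ hK
  · simpa only [mul_pow] using hp2.const_mul ((n + 1 : ℝ) ^ 2)
  · simp only [mul_pow]
    rw [integral_const_mul, setIntegral_sq_hermite_succ hs, sq, mul_assoc]
  · simp only [mul_pow]
    rw [integral_const_mul]
    positivity

end Hermite

open ProbabilityTheory in
/-- the Gaussian restricted to an interval delimited by consecutive roots of the
`n`-th Hermite polynomial (or `±∞`) has Neumann spectral gap `n+1`, i.e. optimal Poincaré
constant `1/(n+1)`. -/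
theorem stmt14 (n : ℕ) (hn : 1 ≤ n) (x : Fin n → ℝ) (hmono : StrictMono x)
    (hroots : ∀ y : ℝ, (Polynomial.aeval y (Polynomial.hermite n) = (0:ℝ)) ↔ ∃ i, y = x i)
    (I : Set ℝ)
    (hI : I = Set.Iic (x ⟨0, hn⟩) ∨ I = Set.Ici (x ⟨n - 1, by omega⟩) ∨
      ∃ i j : Fin n, (j : ℕ) = (i : ℕ) + 1 ∧ I = Set.Icc (x i) (x j))
    (γI : Measure ℝ)
    (hγ : γI = ((gaussianReal 0 1) I)⁻¹ • (gaussianReal 0 1).restrict I) :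
    PoincareOn γI (interior I) (1 / (n + 1)) ∧
    (∀ C, 0 ≤ C → PoincareOn γI (interior I) C → 1 / ((n : ℝ) + 1) ≤ C) := by
  obtain ⟨hs, hconv⟩ : IsNodalInterval (fun y => Polynomial.aeval y (Polynomial.hermite n))
      (interior I) ∧ Convex ℝ I := by
    rcases hI with rfl | rfl | ⟨i, j, hij, rfl⟩
    · rw [interior_Iic]
      exact ⟨isNodalInterval_Iio hmono hroots fun k => Fin.le_def.2 k.1.zero_le, convex_Iic _⟩
    · rw [interior_Ici]
      exact ⟨isNodalInterval_Ioi hmono hroots fun k => Fin.le_def.2 (Nat.le_pred_of_lt k.2),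
        convex_Ici _⟩
    · rw [interior_Icc]
      exact ⟨isNodalInterval_Ioo hmono hroots (Fin.covBy_iff.2 <|
        Nat.covBy_iff_add_one_eq.2 hij.symm), convex_Icc _ _⟩
  have hgauss := isOpenPosMeasure_gaussianReal 0 one_ne_zero
  have hI_pos : 0 < gaussianReal 0 1 I :=
    (hs.isOpen.measure_pos _ hs.nonempty).trans_le (measure_mono interior_subset)
  have hI_ae : interior I =ᵐ[gaussianReal 0 1] I := interior_ae_eq_of_null_frontier
    (gaussianReal_absolutelyContinuous 0 one_ne_zero (hconv.addHaar_frontier volume))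
  have hleast := isLeast_poincareOn_restrict_gaussianReal hs
  rw [hγ, ← Measure.restrict_congr_set hI_ae]
  simp only [poincareOn_smul_measure_iff (ENNReal.inv_ne_zero.2 (measure_ne_top _ I))
    (ENNReal.inv_ne_top.2 hI_pos.ne')]
  exact ⟨hleast.1, fun C _ hC => hleast.2 hC⟩
end
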